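/- arXiv:2603.27588 — 3 statements merged into one kernel-verified Lean document; each statement's English description precedes it below -/
import Mathlib

section
/- For every integer k ≥ 1 and all natural numbers m₀, m₁, …, m_k, one has ∫_{Δ_k} (1 − t₁ − ⋯ − t_k)^{m₀} · t₁^{m₁} ⋯ t_k^{m_k} dt₁⋯dt_k = (m₀! · m₁! ⋯ m_k!) / (m₀ + m₁ + ⋯ + m_k + k)!. -/
open MeasureTheory

/-- The standard `k`-simplex `Δ_k = {t ∈ ℝ^k : tᵢ ≥ 0, ∑ tᵢ ≤ 1}`. -/
def stdSimplex' (k : ℕ) : Set (Fin k → ℝ) :=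
  {t | (∀ i, 0 ≤ t i) ∧ ∑ i, t i ≤ 1}

/-!
Replace `1` by a variable size `s ≥ 0` and induct on the dimension. The slice of the simplex of
size `s` at first coordinate `x ∈ [0, s]` is the simplex of size `s - x` in one dimension less, over
which the integral is, by induction, a constant times a power of `s - x`. What remains is the Beta
integral `∫₀ˢ x ^ p * (s - x) ^ q`, whose factor `q!` cancels the denominator of that constant.
-/

open scoped Nat

theorem integral_pow_mul_one_sub_pow (p q : ℕ) :
    ∫ x in (0 : ℝ)..1, x ^ p * (1 - x) ^ q = (p ! * q ! : ℝ) / (p + q + 1)! := by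
  have re_pos (n : ℕ) : 0 < (n + 1 : ℂ).re := by
    exact_mod_cast n.cast_add_one_pos (α := ℝ)
  have beta_eq : Complex.betaIntegral (p + 1) (q + 1) = (p ! * q ! : ℂ) / (p + q + 1)! := by
    rw [Complex.betaIntegral_eq_Gamma_mul_div _ _ (re_pos p) (re_pos q),
      Complex.Gamma_nat_eq_factorial, Complex.Gamma_nat_eq_factorial,
      show (p + 1 + (q + 1) : ℂ) = (p + q + 1 : ℕ) + 1 by push_cast; ring,
      Complex.Gamma_nat_eq_factorial]
  have integral_eq_beta : ((∫ x in (0 : ℝ)..1, x ^ p * (1 - x) ^ q : ℝ) : ℂ) =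
      Complex.betaIntegral (p + 1) (q + 1) := by
    simp [Complex.betaIntegral, ← intervalIntegral.integral_ofReal]
  exact Complex.ofReal_injective (by rw [integral_eq_beta, beta_eq]; push_cast; rfl)

theorem integral_pow_mul_sub_pow (p q : ℕ) (s : ℝ) :
    ∫ x in (0 : ℝ)..s, x ^ p * (s - x) ^ q =
      (p ! * q ! : ℝ) / (p + q + 1)! * s ^ (p + q + 1) := by
  calc ∫ x in (0 : ℝ)..s, x ^ p * (s - x) ^ q
      = s * ∫ x in (0 : ℝ)..1, (s * x) ^ p * (s - s * x) ^ q := by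
        simpa using (intervalIntegral.mul_integral_comp_mul_left (a := 0) (b := 1)
          (f := fun x ↦ x ^ p * (s - x) ^ q) s).symm
    _ = s * ∫ x in (0 : ℝ)..1, s ^ (p + q) * (x ^ p * (1 - x) ^ q) := by
        congr! 3 with x
        rw [← mul_one_sub, mul_pow, mul_pow]
        ring
    _ = (p ! * q ! : ℝ) / (p + q + 1)! * s ^ (p + q + 1) := by
        rw [intervalIntegral.integral_const_mul, integral_pow_mul_one_sub_pow]
        ring

section Slicing

variable {n : ℕ} {α : Fin (n + 1) → Type*} [∀ i, MeasurableSpace (α i)]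
  {μ : ∀ i, Measure (α i)} [∀ i, SigmaFinite (μ i)]
  {E : Type*} [NormedAddCommGroup E] [NormedSpace ℝ E]

theorem integral_pi_eq_integral_integral_cons {f : (∀ i, α i) → E}
    (hf : Integrable f (Measure.pi μ)) :
    ∫ t, f t ∂Measure.pi μ =
      ∫ x, ∫ t, f (Fin.cons x t) ∂Measure.pi (fun i : Fin n ↦ μ i.succ) ∂μ 0 := by
  have cons_preserving := (measurePreserving_piFinSuccAbove μ 0).symm
  have cons_eq (x : α 0) (t : ∀ i : Fin n, α i.succ) :
      (MeasurableEquiv.piFinSuccAbove α 0).symm (x, t) = Fin.cons x t :=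
    DFunLike.congr_fun (Fin.insertNthEquiv_zero α) (x, t)
  rw [← cons_preserving.integral_comp', integral_prod]
  · simp only [← cons_eq]
    rfl
  · exact cons_preserving.integrable_comp_emb (MeasurableEquiv.measurableEmbedding _) |>.mpr hf

theorem measurable_fin_cons (x : α 0) :
    Measurable (Fin.cons x : (∀ i : Fin n, α i.succ) → ∀ i, α i) := by
  refine measurable_pi_iff.mpr (Fin.cases ?_ fun i ↦ ?_)
  · simp
  · simpa using measurable_pi_apply i

theorem setIntegral_pi_eq_integral_setIntegral_cons {f : (∀ i, α i) → E} {S : Set (∀ i, α i)}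
    (hS : MeasurableSet S) (hf : IntegrableOn f S (Measure.pi μ)) :
    ∫ t in S, f t ∂Measure.pi μ =
      ∫ x, ∫ t in Fin.cons x ⁻¹' S, f (Fin.cons x t)
        ∂Measure.pi (fun i : Fin n ↦ μ i.succ) ∂μ 0 := by
  rw [← integral_indicator hS,
    integral_pi_eq_integral_integral_cons ((integrable_indicator_iff hS).mpr hf)]
  congr! 2 with x
  rw [← integral_indicator (measurable_fin_cons x hS)]
  rfl

end Slicing

/-- The simplex `{t ∈ ℝ^ι : tᵢ ≥ 0, ∑ tᵢ ≤ s}` of size `s` with a vertex at the origin. The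
size is a parameter because slicing the simplex by a hyperplane `tᵢ = x` shrinks it. -/
def cornerSimplex (ι : Type*) [Fintype ι] (s : ℝ) : Set (ι → ℝ) :=
  {t | (∀ i, 0 ≤ t i) ∧ ∑ i, t i ≤ s}

namespace cornerSimplex

section

variable {ι : Type*} [Fintype ι] {s : ℝ}

theorem subset_Icc : cornerSimplex ι s ⊆ Set.Icc 0 fun _ ↦ s :=
  fun _ ht ↦ ⟨ht.1, fun i ↦
    (Finset.single_le_sum (fun j _ ↦ ht.1 j) (Finset.mem_univ i)).trans ht.2⟩

theorem isClosed : IsClosed (cornerSimplex ι s) := by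
  simp only [cornerSimplex, Set.ofPred_and, Set.ofPred_forall]
  exact (isClosed_iInter fun i ↦ isClosed_le (by fun_prop) (by fun_prop)).inter
    (isClosed_le (by fun_prop) (by fun_prop))

theorem isCompact : IsCompact (cornerSimplex ι s) :=
  isCompact_Icc.of_isClosed_subset isClosed subset_Icc

theorem eq_univ_of_isEmpty [IsEmpty ι] (hs : 0 ≤ s) : cornerSimplex ι s = Set.univ := by
  simp [cornerSimplex, hs]

end

variable {k : ℕ} {s x : ℝ}

theorem preimage_cons_of_nonneg (hx : 0 ≤ x) :
    Fin.cons x ⁻¹' cornerSimplex (Fin (k + 1)) s = cornerSimplex (Fin k) (s - x) := by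
  ext t
  simp [cornerSimplex, Fin.forall_fin_succ, Fin.sum_univ_succ, hx, le_sub_iff_add_le']

theorem preimage_cons_of_notMem_Icc (hx : x ∉ Set.Icc 0 s) :
    Fin.cons x ⁻¹' cornerSimplex (Fin (k + 1)) s = (∅ : Set (Fin k → ℝ)) :=
  Set.eq_empty_of_forall_notMem fun _ ht ↦ hx ⟨(subset_Icc ht).1 0, (subset_Icc ht).2 0⟩

theorem setIntegral_succ {E : Type*} [NormedAddCommGroup E] [NormedSpace ℝ E]
    {f : (Fin (k + 1) → ℝ) → E} (hf : IntegrableOn f (cornerSimplex (Fin (k + 1)) s)) :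
    ∫ t in cornerSimplex (Fin (k + 1)) s, f t =
      ∫ x in Set.Icc 0 s, ∫ t in cornerSimplex (Fin k) (s - x), f (Fin.cons x t) := by
  rw [volume_pi, setIntegral_pi_eq_integral_setIntegral_cons isClosed.measurableSet hf,
    ← setIntegral_eq_integral_of_forall_compl_eq_zero (s := Set.Icc 0 s)]
  · refine setIntegral_congr_fun measurableSet_Icc fun x hx ↦ ?_
    simp only [preimage_cons_of_nonneg hx.1, volume_pi]
  · intro x hx
    simp [preimage_cons_of_notMem_Icc hx]

theorem setIntegral_pow_mul_prod_pow (a : ℕ) (m : Fin k → ℕ) (hs : 0 ≤ s) :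
    ∫ t in cornerSimplex (Fin k) s, (s - ∑ i, t i) ^ a * ∏ i, t i ^ m i =
      (a ! * ∏ i, ((m i)! : ℝ)) / (a + ∑ i, m i + k)! * s ^ (a + ∑ i, m i + k) := by
  induction k generalizing s with
  | zero =>
    rw [eq_univ_of_isEmpty hs, setIntegral_univ, Measure.volume_pi_eq_dirac 0]
    simp [Nat.factorial_ne_zero]
  | succ k ih =>
    set N := a + ∑ i : Fin k, m i.succ + k
    set c : ℝ := (a ! * ∏ i : Fin k, ((m i.succ)! : ℝ)) / N ! with hc
    have slice_integral (x : ℝ) (hx : x ∈ Set.Icc 0 s) :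
        ∫ t in cornerSimplex (Fin k) (s - x),
          (s - ∑ i, (Fin.cons x t : Fin (k + 1) → ℝ) i) ^ a *
            ∏ i, (Fin.cons x t : Fin (k + 1) → ℝ) i ^ m i =
          c * (x ^ m 0 * (s - x) ^ N) := by
      simp only [Fin.sum_univ_succ, Fin.prod_univ_succ, Fin.cons_zero, Fin.cons_succ, ← sub_sub,
        mul_left_comm _ (x ^ m 0)]
      rw [integral_const_mul, ih (fun i ↦ m i.succ) (sub_nonneg.mpr hx.2)]
    calc ∫ t in cornerSimplex (Fin (k + 1)) s, (s - ∑ i, t i) ^ a * ∏ i, t i ^ m i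
        = ∫ x in Set.Icc 0 s, c * (x ^ m 0 * (s - x) ^ N) := by
          rw [setIntegral_succ (ContinuousOn.integrableOn_compact isCompact (by fun_prop))]
          exact setIntegral_congr_fun measurableSet_Icc slice_integral
      _ = c * ((m 0)! * N ! / (m 0 + N + 1)! * s ^ (m 0 + N + 1)) := by
          rw [integral_const_mul, integral_Icc_eq_integral_Ioc,
            ← intervalIntegral.integral_of_le hs, integral_pow_mul_sub_pow]
      _ = (a ! * ∏ i, ((m i)! : ℝ)) / (a + ∑ i, m i + (k + 1))! *
          s ^ (a + ∑ i, m i + (k + 1)) := by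
          rw [Fin.sum_univ_succ, Fin.prod_univ_succ,
            show a + (m 0 + ∑ i : Fin k, m i.succ) + (k + 1) = m 0 + N + 1 by lia, hc]
          field_simp

end cornerSimplex

/-- For every `k ≥ 1` and natural numbers `m₀, …, m_k`,
`∫_{Δ_k} (1 − t₁ − ⋯ − t_k)^{m₀} t₁^{m₁} ⋯ t_k^{m_k} dt = m₀!⋯m_k! / (m₀+⋯+m_k+k)!`. -/
theorem simplex_beta_integral (k : ℕ) (hk : 1 ≤ k) (m : Fin (k + 1) → ℕ) :
    ∫ t in stdSimplex' k, (1 - ∑ i, t i) ^ (m 0) * ∏ i : Fin k, (t i) ^ (m i.succ) =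
      ((∏ i, Nat.factorial (m i) : ℕ) : ℝ) /
        ((Nat.factorial ((∑ i, m i) + k) : ℕ) : ℝ) := by
  have stdSimplex_eq : stdSimplex' k = cornerSimplex (Fin k) 1 := rfl
  rw [stdSimplex_eq, cornerSimplex.setIntegral_pow_mul_prod_pow _ _ zero_le_one,
    Fin.sum_univ_succ, Fin.prod_univ_succ]
  simp
end

section
/- Every strict 2-term L∞ algebra gives rise to a differential Lie crossed module: let (V₀, V₁, α, [·,·], [·,·]) be a strict 2-term L∞ algebra (i.e. the axioms (i)–(v) hold with [·,·,·] ≡ 0). Then: (a) the bracket [·,·] makes V₀ a Lie algebra (it is antisymmetric and satisfies the Jacobi identity); (b) the formula ⁅X,Y⁆ := [α(X), Y] defines an antisymmetric bilinear bracket on V₁ satisfying the Jacobi identity, making V₁ a Lie algebra; (c) α : V₁ → V₀ is a Lie algebra homomorphism, i.e. α(⁅X,Y⁆) = [α(X), α(Y)]; (d) for each x ∈ V₀ the map X ↦ [x,X] is a derivation of the bracket ⁅·,·⁆ on V₁, and x ↦ [x,·] is a Lie algebra action, i.e. [[x,y],X] = [x,[y,X]] − [y,[x,X]]; (e) the equivariance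 and Peiffer identities hold: α([x,X]) = [x, α(X)] and [α(X), Y] = ⁅X, Y⁆. -/
/-- A bilinear Lie bracket. Antisymmetry is imposed as `b x y = -b y x`, which yields `b x x = 0`
if `V` has no 2-torsion (as over `ℝ`) but not in general. -/
structure IsLieBracket {R V : Type*} [CommRing R] [AddCommGroup V] [Module R V]
    (b : V →ₗ[R] V →ₗ[R] V) : Prop where
  antisymm : ∀ x y, b x y = -b y x
  jacobi : ∀ x y z, b x (b y z) + b y (b z x) + b z (b x y) = 0

theorem IsLieBracket.of_leibniz {R V : Type*} [CommRing R] [AddCommGroup V] [Module R V]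
    {b : V →ₗ[R] V →ₗ[R] V} (antisymm : ∀ x y, b x y = -b y x)
    (leibniz : ∀ x y z, b x (b y z) = b (b x y) z + b y (b x z)) : IsLieBracket b where
  antisymm := antisymm
  jacobi x y z := by
    rw [leibniz x y z, antisymm z x, antisymm z (b x y), map_neg]
    abel

section TwoTerm

variable {R V₀ V₁ : Type*} [CommRing R] [AddCommGroup V₀] [Module R V₀]
  [AddCommGroup V₁] [Module R V₁]

/-- Strict 2-term L∞ algebras: the axioms (i)–(iv) with vanishing trilinear bracket. Axiom (iii) is
the Jacobi identity in `lie`, and axiom (v) is absent because each of its terms contains the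
trilinear bracket. -/
structure IsStrictTwoTermLInfinity (α : V₁ →ₗ[R] V₀) (br₀ : V₀ →ₗ[R] V₀ →ₗ[R] V₀)
    (br₁ : V₀ →ₗ[R] V₁ →ₗ[R] V₁) : Prop where
  lie : IsLieBracket br₀
  equivariant : ∀ x X, α (br₁ x X) = br₀ x (α X)
  add_swap_eq_zero : ∀ X Y, br₁ (α X) Y + br₁ (α Y) X = 0
  action_sub_eq_zero : ∀ x y X, br₁ x (br₁ y X) - br₁ y (br₁ x X) - br₁ (br₀ x y) X = 0

/-- Differential Lie crossed modules `α : V₁ → V₀`, with Lie brackets `br₀` on `V₀` and `b` on `V₁`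
and with `V₀` acting on `V₁` through `act`. -/
structure IsDifferentialCrossedModule (α : V₁ →ₗ[R] V₀) (br₀ : V₀ →ₗ[R] V₀ →ₗ[R] V₀)
    (b : V₁ →ₗ[R] V₁ →ₗ[R] V₁) (act : V₀ →ₗ[R] V₁ →ₗ[R] V₁) : Prop where
  lie_base : IsLieBracket br₀
  lie_fiber : IsLieBracket b
  map_bracket : ∀ X Y, α (b X Y) = br₀ (α X) (α Y)
  derivation : ∀ x X Y, act x (b X Y) = b (act x X) Y + b X (act x Y)
  action : ∀ x y X, act (br₀ x y) X = act x (act y X) - act y (act x X)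
  equivariant : ∀ x X, α (act x X) = br₀ x (α X)
  peiffer : ∀ X Y, act (α X) Y = b X Y

/-- The bracket `⁅X, Y⁆ := [α X, Y]` on `V₁`, induced by the action `br₁` along `α`. -/
def derivedBracket (α : V₁ →ₗ[R] V₀) (br₁ : V₀ →ₗ[R] V₁ →ₗ[R] V₁) : V₁ →ₗ[R] V₁ →ₗ[R] V₁ :=
  br₁ ∘ₗ α

@[simp]
theorem derivedBracket_apply (α : V₁ →ₗ[R] V₀) (br₁ : V₀ →ₗ[R] V₁ →ₗ[R] V₁) (X Y : V₁) :
    derivedBracket α br₁ X Y = br₁ (α X) Y :=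
  rfl

namespace IsStrictTwoTermLInfinity

variable {α : V₁ →ₗ[R] V₀} {br₀ : V₀ →ₗ[R] V₀ →ₗ[R] V₀} {br₁ : V₀ →ₗ[R] V₁ →ₗ[R] V₁}

theorem bracket_action (h : IsStrictTwoTermLInfinity α br₀ br₁) (x y : V₀) (X : V₁) :
    br₁ (br₀ x y) X = br₁ x (br₁ y X) - br₁ y (br₁ x X) :=
  (sub_eq_zero.mp (h.action_sub_eq_zero x y X)).symm

theorem derivedBracket_antisymm (h : IsStrictTwoTermLInfinity α br₀ br₁) (X Y : V₁) :
    derivedBracket α br₁ X Y = -derivedBracket α br₁ Y X :=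
  eq_neg_of_add_eq_zero_left (h.add_swap_eq_zero X Y)

theorem action_derivedBracket (h : IsStrictTwoTermLInfinity α br₀ br₁) (x : V₀) (X Y : V₁) :
    br₁ x (derivedBracket α br₁ X Y) =
      derivedBracket α br₁ (br₁ x X) Y + derivedBracket α br₁ X (br₁ x Y) := by
  simp only [derivedBracket_apply]
  rw [h.equivariant, h.bracket_action, sub_add_cancel]

-- For `x = α X` the derivation property of `br₁ x` is the Jacobi identity in Leibniz form.
theorem isLieBracket_derivedBracket (h : IsStrictTwoTermLInfinity α br₀ br₁) :
    IsLieBracket (derivedBracket α br₁) :=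
  .of_leibniz h.derivedBracket_antisymm fun X ↦ h.action_derivedBracket (α X)

end IsStrictTwoTermLInfinity

theorem strict_twoTermLInfinity_gives_crossedModule_general {α : V₁ →ₗ[R] V₀}
    {br₀ : V₀ →ₗ[R] V₀ →ₗ[R] V₀} {br₁ : V₀ →ₗ[R] V₁ →ₗ[R] V₁}
    (h : IsStrictTwoTermLInfinity α br₀ br₁) :
    IsDifferentialCrossedModule α br₀ (derivedBracket α br₁) br₁ where
  lie_base := h.lie
  lie_fiber := h.isLieBracket_derivedBracket
  map_bracket X Y := h.equivariant (α X) Y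
  derivation := h.action_derivedBracket
  action := h.bracket_action
  equivariant := h.equivariant
  peiffer _ _ := rfl

end TwoTerm

/-- Every strict 2-term L∞ algebra `(V₀, V₁, α, br₀, br₁)` (axioms (i)–(v) with the
trilinear bracket identically zero) gives rise to a differential Lie crossed module:
(a) `br₀` makes `V₀` a Lie algebra; (b) `⁅X,Y⁆ := br₁ (α X) Y` is an antisymmetric
bracket on `V₁` satisfying the Jacobi identity; (c) `α` is a Lie algebra homomorphism;
(d) each `br₁ x` is a derivation of `⁅·,·⁆` and `x ↦ br₁ x` is a Lie algebra action;
(e) the equivariance and Peiffer identities hold. -/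
theorem strict_twoTermLInfinity_gives_crossedModule
    (V₀ V₁ : Type) [AddCommGroup V₀] [Module ℝ V₀] [AddCommGroup V₁] [Module ℝ V₁]
    (α : V₁ →ₗ[ℝ] V₀) (br₀ : V₀ →ₗ[ℝ] V₀ →ₗ[ℝ] V₀) (br₁ : V₀ →ₗ[ℝ] V₁ →ₗ[ℝ] V₁)
    (hanti : ∀ x y, br₀ x y = - br₀ y x)
    (h_i : ∀ (x : V₀) (X : V₁), α (br₁ x X) = br₀ x (α X))
    (h_ii : ∀ X Y : V₁, br₁ (α X) Y + br₁ (α Y) X = 0)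
    (h_iii : ∀ x y z : V₀, br₀ x (br₀ y z) + br₀ y (br₀ z x) + br₀ z (br₀ x y) = 0)
    (h_iv : ∀ (x y : V₀) (X : V₁),
      br₁ x (br₁ y X) - br₁ y (br₁ x X) - br₁ (br₀ x y) X = 0) :
    -- (a) V₀ is a Lie algebra
    ((∀ x y : V₀, br₀ x y = - br₀ y x) ∧
     (∀ x y z : V₀, br₀ x (br₀ y z) + br₀ y (br₀ z x) + br₀ z (br₀ x y) = 0)) ∧
    -- (b) ⁅X,Y⁆ := br₁ (α X) Y is an antisymmetric bracket satisfying Jacobi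
    ((∀ X Y : V₁, br₁ (α X) Y = - br₁ (α Y) X) ∧
     (∀ X Y Z : V₁,
        br₁ (α X) (br₁ (α Y) Z) + br₁ (α Y) (br₁ (α Z) X)
          + br₁ (α Z) (br₁ (α X) Y) = 0)) ∧
    -- (c) α is a Lie algebra homomorphism
    (∀ X Y : V₁, α (br₁ (α X) Y) = br₀ (α X) (α Y)) ∧
    -- (d) br₁ x is a derivation of ⁅·,·⁆, and x ↦ br₁ x is a Lie algebra action
    ((∀ (x : V₀) (X Y : V₁),
        br₁ x (br₁ (α X) Y) = br₁ (α (br₁ x X)) Y + br₁ (α X) (br₁ x Y)) ∧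
     (∀ (x y : V₀) (X : V₁), br₁ (br₀ x y) X = br₁ x (br₁ y X) - br₁ y (br₁ x X))) ∧
    -- (e) equivariance and Peiffer identities
    ((∀ (x : V₀) (X : V₁), α (br₁ x X) = br₀ x (α X)) ∧
     (∀ X Y : V₁, br₁ (α X) Y = br₁ (α X) Y)) := by
  have c := strict_twoTermLInfinity_gives_crossedModule_general ⟨⟨hanti, h_iii⟩, h_i, h_ii, h_iv⟩
  exact ⟨⟨c.lie_base.antisymm, c.lie_base.jacobi⟩, ⟨c.lie_fiber.antisymm, c.lie_fiber.jacobi⟩,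
    c.map_bracket, ⟨c.derivation, c.action⟩, c.equivariant, c.peiffer⟩
end

section
/- Let V₀, V₁ be real vector spaces, r ≥ 1, and P : V₀^r × V₁ → ℝ multilinear and symmetric in its first r arguments. Let g₀ : V₀ → V₀ and g₁ : V₁ → V₁ and τ : V₀ → V₁ be linear and g₂ : V₀ × V₀ → V₁ bilinear, and assume the three invariance laws: (I1) P(g₀(x₁),…,g₀(x_r); g₁(X)) = P(x₁,…,x_r; X) for all x₁,…,x_r ∈ V₀, X ∈ V₁; (I2) P(g₀(x₁),…,g₀(x_r); g₂(y,z)) = −Σ_{i=1}^{r} P(g₀(x₁),…,g₀(z),…,g₀(x_r); g₂(y,x_i)) (g₀(z) replacing g₀(x_i) in the i-th slot); (I3) P(x₁,…,x_r; τ(y)) = −Σ_{i=1}^{r} P(x₁,…,y,…,x_r; τ(x_i)) (y replacing x_i in the i-th slot). Then for all x, y ∈ V₀ and X ∈ V₁: P(g₀(x),…,g₀(x); g₁(X − τ(x)) + g₂(y,x)) = P(x,…,x; X). (This is the pointwise algebraic content of the Proposition that the higher invariant form ⟨𝓕ⁿ;𝓗⟩ is invariant under 2-term L∞ algebra 1-gauge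 transformations, with x the value of the curvature 𝓕, X the value of 𝓗, and y the value of A − σ_g.) -/
/-!
On the diagonal every term of the sums in (I2) and (I3) equals the left-hand side, so both laws
read `a = -(r • a)` there. Hence `(r + 1) • a = 0` and `a = 0`: the `τ` and `g₂` contributions to
the transformed form vanish, and (I1) handles the rest.
-/

section ExchangeSkew

variable {ι α M : Type*} [Fintype ι] [DecidableEq ι] [AddCommGroup M]

/-- The exchange law common to (I2) and (I3): the value of `Q` at the slots `v` and the extra
argument `z` is minus the sum of the values obtained by exchanging `z` with each slot in turn.
The arguments range over a bare type, since the law involves no operation on them. -/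
def IsExchangeSkew (Q : (ι → α) → α → M) : Prop :=
  ∀ (v : ι → α) (z : α), Q v z = -∑ i, Q (Function.update v i z) (v i)

theorem IsExchangeSkew.diagonal_eq_zero [IsAddTorsionFree M] {Q : (ι → α) → α → M}
    (hQ : IsExchangeSkew Q) (a : α) : Q (fun _ => a) a = 0 := by
  have h_diag : Q (fun _ => a) a = -(Fintype.card ι • Q (fun _ => a) a) := by
    have h_update (i : ι) : Function.update (fun _ => a) i a = fun _ => a :=
      Function.update_eq_self i _
    simpa only [h_update, Finset.sum_const, Finset.card_univ] using hQ (fun _ => a) a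
  have h_nsmul : (Fintype.card ι + 1) • Q (fun _ => a) a = 0 := by
    rw [succ_nsmul', add_eq_zero_iff_eq_neg]
    exact h_diag
  exact (nsmul_eq_zero_iff_right (Nat.succ_ne_zero _)).mp h_nsmul

end ExchangeSkew

theorem gauge_invariance_pointwise_general
    {ι V₀ V₁ M : Type*} [Fintype ι] [DecidableEq ι] [AddGroup V₁] [AddCommGroup M]
    [IsAddTorsionFree M] (P : (ι → V₀) → V₁ →+ M)
    (g₀ : V₀ → V₀) (g₁ : V₁ → V₁) (τ : V₀ → V₁) (g₂ : V₀ → V₀ → V₁)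
    (hI1 : ∀ (v : ι → V₀) (X : V₁), P (g₀ ∘ v) (g₁ X) = P v X)
    (hI2 : ∀ y : V₀, IsExchangeSkew fun v z => P (g₀ ∘ v) (g₂ y z))
    (hI3 : IsExchangeSkew fun v y => P v (τ y)) (x y : V₀) (X : V₁) :
    P (fun _ => g₀ x) (g₁ (X - τ x) + g₂ y x) = P (fun _ => x) X := by
  have h_g₂ : P (fun _ => g₀ x) (g₂ y x) = 0 := (hI2 y).diagonal_eq_zero x
  have h_τ : P (fun _ => x) (τ x) = 0 := hI3.diagonal_eq_zero x
  calc P (fun _ => g₀ x) (g₁ (X - τ x) + g₂ y x)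
      = P (fun _ => g₀ x) (g₁ (X - τ x)) := by rw [map_add, h_g₂, add_zero]
    _ = P (fun _ => x) (X - τ x) := hI1 (fun _ => x) (X - τ x)
    _ = P (fun _ => x) X := by rw [map_sub, h_τ, sub_zero]

/-- Pointwise algebraic content of the gauge invariance of the higher invariant form
`⟨𝓕ⁿ;𝓗⟩`: if `P : V₀^r × V₁ → ℝ` is multilinear, symmetric in its first `r` arguments,
and satisfies the three invariance laws (I1)–(I3) with respect to linear maps
`g₀ : V₀ → V₀`, `g₁ : V₁ → V₁`, `τ : V₀ → V₁` and a bilinear map `g₂ : V₀ × V₀ → V₁`,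
then `P(g₀x,…,g₀x; g₁(X − τx) + g₂(y,x)) = P(x,…,x; X)`. -/
theorem gauge_invariance_pointwise
    (V₀ V₁ : Type) [AddCommGroup V₀] [Module ℝ V₀] [AddCommGroup V₁] [Module ℝ V₁]
    (r : ℕ) (hr : 1 ≤ r)
    (P : MultilinearMap ℝ (fun _ : Fin r => V₀) (V₁ →ₗ[ℝ] ℝ))
    (hsymm : ∀ (v : Fin r → V₀) (σ : Equiv.Perm (Fin r)), P (v ∘ σ) = P v)
    (g₀ : V₀ →ₗ[ℝ] V₀) (g₁ : V₁ →ₗ[ℝ] V₁) (τ : V₀ →ₗ[ℝ] V₁)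
    (g₂ : V₀ →ₗ[ℝ] V₀ →ₗ[ℝ] V₁)
    (hI1 : ∀ (v : Fin r → V₀) (X : V₁),
      P (fun i => g₀ (v i)) (g₁ X) = P v X)
    (hI2 : ∀ (v : Fin r → V₀) (y z : V₀),
      P (fun i => g₀ (v i)) (g₂ y z) =
        - ∑ i : Fin r,
            P (Function.update (fun j => g₀ (v j)) i (g₀ z)) (g₂ y (v i)))
    (hI3 : ∀ (v : Fin r → V₀) (y : V₀),
      P v (τ y) = - ∑ i : Fin r, P (Function.update v i y) (τ (v i))) :
    ∀ (x y : V₀) (X : V₁),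
      P (fun _ => g₀ x) (g₁ (X - τ x) + g₂ y x) = P (fun _ => x) X := by
  exact gauge_invariance_pointwise_general (fun v => (P v).toAddMonoidHom) g₀ g₁ τ (g₂ · ·) hI1
    (fun y v z => by simp only [Function.comp_update]; exact hI2 v y z) hI3
end
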